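/- arXiv:2408.02506 — 3 statements merged into one kernel-verified Lean document; each statement's English description precedes it below -/
import Mathlib

section
/- Relation between the max-relative entropy and the robustness of bidirectional classical communication: let J, indexed by A₀ × A₁ × B₀ × B₁, be the Choi matrix of a bipartite channel. Then Λ(J) = 1 + R(J), where R(J) = sInf {r : ℝ | 0 ≤ r ∧ ∃ K indexed by A₀ × A₁ × B₀ × B₁, K is positive semidefinite ∧ Tr_{A₁B₁} K = I_{A₀B₀} ∧ (1/(1+r)) • (J + r • K) satisfies the non-signalling conditions}. -/
open Matrix
open scoped ComplexOrder

noncomputable section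

/-- Loewner order on complex matrices: `M ≤ N` iff `N - M` is positive semidefinite. -/
def LoewnerLE {n : Type*} [Fintype n] (M N : Matrix n n ℂ) : Prop := (N - M).PosSemidef

/-- `π_S ⊗ X`, the maximally mixed state on `S` tensored with `X`. -/
def piFst {S T : Type*} [Fintype S] [DecidableEq S] (X : Matrix T T ℂ) :
    Matrix (S × T) (S × T) ℂ :=
  fun x y => ((Fintype.card S : ℂ))⁻¹ * (if x.1 = y.1 then 1 else 0) * X x.2 y.2

/-- `I_S ⊗ X`, the identity on `S` tensored with `X`. -/
def idFst {S T : Type*} [DecidableEq S] (X : Matrix T T ℂ) :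
    Matrix (S × T) (S × T) ℂ :=
  fun x y => (if x.1 = y.1 then 1 else 0) * X x.2 y.2

/-- Partial trace over the second tensor factor. -/
def trOut {S T : Type*} [Fintype T] (X : Matrix (S × T) (S × T) ℂ) : Matrix S S ℂ :=
  fun s s' => ∑ t : T, X (s, t) (s', t)

/-- Partial trace over the first tensor factor. -/
def trInp {S T : Type*} [Fintype S] (X : Matrix (S × T) (S × T) ℂ) : Matrix T T ℂ :=
  fun t t' => ∑ s : S, X (s, t) (s, t')

section FourSystems

variable {A₀ A₁ B₀ B₁ : Type*} [Fintype A₀] [Fintype A₁] [Fintype B₀] [Fintype B₁]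
  [DecidableEq A₀] [DecidableEq A₁] [DecidableEq B₀] [DecidableEq B₁]

/-- `Tr_{A₁}` of a matrix on `A₀ × A₁ × B₀ × B₁`. -/
def trA1 (J : Matrix (A₀ × A₁ × B₀ × B₁) (A₀ × A₁ × B₀ × B₁) ℂ) :
    Matrix (A₀ × B₀ × B₁) (A₀ × B₀ × B₁) ℂ :=
  fun x y => ∑ a : A₁, J (x.1, a, x.2) (y.1, a, y.2)

/-- `Tr_{B₁}` of a matrix on `A₀ × A₁ × B₀ × B₁`. -/
def trB1 (J : Matrix (A₀ × A₁ × B₀ × B₁) (A₀ × A₁ × B₀ × B₁) ℂ) :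
    Matrix (A₀ × A₁ × B₀) (A₀ × A₁ × B₀) ℂ :=
  fun x y => ∑ b : B₁, J (x.1, x.2.1, x.2.2, b) (y.1, y.2.1, y.2.2, b)

/-- `Tr_{A₀A₁}` of a matrix on `A₀ × A₁ × B₀ × B₁`. -/
def trA0A1 (J : Matrix (A₀ × A₁ × B₀ × B₁) (A₀ × A₁ × B₀ × B₁) ℂ) :
    Matrix (B₀ × B₁) (B₀ × B₁) ℂ :=
  fun x y => ∑ a₀ : A₀, ∑ a₁ : A₁, J (a₀, a₁, x) (a₀, a₁, y)

/-- `Tr_{B₀B₁}` of a matrix on `A₀ × A₁ × B₀ × B₁`. -/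
def trB0B1 (J : Matrix (A₀ × A₁ × B₀ × B₁) (A₀ × A₁ × B₀ × B₁) ℂ) :
    Matrix (A₀ × A₁) (A₀ × A₁) ℂ :=
  fun x y => ∑ b₀ : B₀, ∑ b₁ : B₁, J (x.1, x.2, b₀, b₁) (y.1, y.2, b₀, b₁)

/-- `Tr_{A₁B₁}` of a matrix on `A₀ × A₁ × B₀ × B₁`. -/
def trA1B1 (J : Matrix (A₀ × A₁ × B₀ × B₁) (A₀ × A₁ × B₀ × B₁) ℂ) :
    Matrix (A₀ × B₀) (A₀ × B₀) ℂ :=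
  fun x y => ∑ a₁ : A₁, ∑ b₁ : B₁, J (x.1, a₁, x.2, b₁) (y.1, a₁, y.2, b₁)

/-- `π_{B₀} ⊗ Y`, reindexed to `A₀ × A₁ × B₀` with the subsystems in this order. -/
def piB0 (Y : Matrix (A₀ × A₁) (A₀ × A₁) ℂ) :
    Matrix (A₀ × A₁ × B₀) (A₀ × A₁ × B₀) ℂ :=
  fun x y => ((Fintype.card B₀ : ℂ))⁻¹ * (if x.2.2 = y.2.2 then 1 else 0) *
    Y (x.1, x.2.1) (y.1, y.2.1)

/-- The non-signalling conditions for a Choi matrix on `A₀ × A₁ × B₀ × B₁`: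
`Tr_{A₁} J = π_{A₀} ⊗ Tr_{A₀A₁} J` and `Tr_{B₁} J = π_{B₀} ⊗ Tr_{B₀B₁} J`. -/
def NS (J : Matrix (A₀ × A₁ × B₀ × B₁) (A₀ × A₁ × B₀ × B₁) ℂ) : Prop :=
  trA1 J = piFst (trA0A1 J) ∧ trB1 J = piB0 (trB0B1 J)

/-- The optimal value `Λ(J)` of the SDP whose logarithm is the max-relative entropy of
bidirectional classical communication of the bipartite channel with Choi matrix `J`. -/
def Lam (J : Matrix (A₀ × A₁ × B₀ × B₁) (A₀ × A₁ × B₀ × B₁) ℂ) : ℝ :=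
  sInf {l : ℝ | ∃ Y : Matrix (A₀ × A₁ × B₀ × B₁) (A₀ × A₁ × B₀ × B₁) ℂ,
    LoewnerLE J Y ∧ trA1B1 Y = l • (1 : Matrix (A₀ × B₀) (A₀ × B₀) ℂ) ∧ NS Y}

end FourSystems

/-- The robustness of bidirectional classical communication `R(J)`: the least `r ≥ 0`
such that `(J + r K)/(1 + r)` is non-signalling for some Choi matrix `K` of a bipartite
channel. -/
def Rob {A₀ A₁ B₀ B₁ : Type*}
    [Fintype A₀] [Fintype A₁] [Fintype B₀] [Fintype B₁]
    [DecidableEq A₀] [DecidableEq A₁] [DecidableEq B₀] [DecidableEq B₁]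
    (J : Matrix (A₀ × A₁ × B₀ × B₁) (A₀ × A₁ × B₀ × B₁) ℂ) : ℝ :=
  sInf {r : ℝ | 0 ≤ r ∧ ∃ K : Matrix (A₀ × A₁ × B₀ × B₁) (A₀ × A₁ × B₀ × B₁) ℂ,
    K.PosSemidef ∧ trA1B1 K = 1 ∧ NS ((1 / (1 + r)) • (J + r • K))}

/-! The feasible points of the two optimisation problems correspond under `r ↦ 1 + r`. If `K` is a
Choi matrix making `J + r K` proportional to a non-signalling matrix, then `Y = J + r K` is feasible
for `Λ` with value `1 + r`. Conversely, if `Y` is feasible with value `1 + r`, then `Y - J` is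
positive semidefinite with `Tr_{A₁B₁} (Y - J) = r I`, hence `r` times a Choi matrix; for `r = 0` it
has trace zero and therefore vanishes. Passing to infima requires a feasible point: `J ≤ ‖J‖ I`, and
multiples of the identity are non-signalling. -/

open scoped MatrixOrder Matrix.Norms.L2Operator in
theorem exists_loewnerLE_smul_one {n : Type*} [Fintype n] [DecidableEq n] {M : Matrix n n ℂ}
    (hM : M.IsHermitian) : ∃ c : ℝ, LoewnerLE M (c • 1) := by
  refine ⟨‖M‖, Matrix.le_iff.mp ?_⟩
  simpa only [Algebra.algebraMap_eq_smul_one] using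
    IsSelfAdjoint.le_algebraMap_norm_self (a := M) hM

section MaximallyMixed

variable {R S T A₀ A₁ B₀ : Type*} [SMul R ℂ] [SMulCommClass R ℂ ℂ]
  [Fintype S] [DecidableEq S] [Fintype B₀] [DecidableEq B₀]

theorem piFst_smul (c : R) (X : Matrix T T ℂ) :
    piFst (S := S) (c • X) = c • piFst X := by
  ext x y
  simp only [piFst, Matrix.smul_apply, mul_smul_comm]

theorem piB0_smul (c : R) (Y : Matrix (A₀ × A₁) (A₀ × A₁) ℂ) :
    piB0 (B₀ := B₀) (c • Y) = c • piB0 Y := by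
  ext x y
  simp only [piB0, Matrix.smul_apply, mul_smul_comm]

theorem card_smul_piFst_one [DecidableEq T] [Nonempty S] :
    Fintype.card S • piFst (S := S) (1 : Matrix T T ℂ) = 1 := by
  ext ⟨s, t⟩ ⟨s', t'⟩
  by_cases hs : s = s' <;> by_cases ht : t = t' <;> simp [piFst, Matrix.one_apply, hs, ht]

theorem card_smul_piB0_one [DecidableEq A₀] [DecidableEq A₁] [Nonempty B₀] :
    Fintype.card B₀ • piB0 (B₀ := B₀) (1 : Matrix (A₀ × A₁) (A₀ × A₁) ℂ) = 1 := by
  ext ⟨a₀, a₁, b₀⟩ ⟨a₀', a₁', b₀'⟩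
  by_cases ha₀ : a₀ = a₀' <;> by_cases ha₁ : a₁ = a₁' <;> by_cases hb₀ : b₀ = b₀' <;>
    simp [piB0, Matrix.one_apply, ha₀, ha₁, hb₀]

end MaximallyMixed

section PartialTrace

variable {R A₀ A₁ B₀ B₁ : Type*} [DistribSMul R ℂ] (c : R)
  (X Y : Matrix (A₀ × A₁ × B₀ × B₁) (A₀ × A₁ × B₀ × B₁) ℂ)

theorem trA1_smul [Fintype A₁] : trA1 (c • X) = c • trA1 X := by
  ext x y
  simp only [trA1, Matrix.smul_apply, Finset.smul_sum]

theorem trB1_smul [Fintype B₁] : trB1 (c • X) = c • trB1 X := by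
  ext x y
  simp only [trB1, Matrix.smul_apply, Finset.smul_sum]

theorem trA0A1_smul [Fintype A₀] [Fintype A₁] : trA0A1 (c • X) = c • trA0A1 X := by
  ext x y
  simp only [trA0A1, Matrix.smul_apply, Finset.smul_sum]

theorem trB0B1_smul [Fintype B₀] [Fintype B₁] : trB0B1 (c • X) = c • trB0B1 X := by
  ext x y
  simp only [trB0B1, Matrix.smul_apply, Finset.smul_sum]

theorem trA1B1_smul [Fintype A₁] [Fintype B₁] : trA1B1 (c • X) = c • trA1B1 X := by
  ext x y
  simp only [trA1B1, Matrix.smul_apply, Finset.smul_sum]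

theorem trA1B1_add [Fintype A₁] [Fintype B₁] :
    trA1B1 (X + Y) = trA1B1 X + trA1B1 Y := by
  ext x y
  simp only [trA1B1, Matrix.add_apply, Finset.sum_add_distrib]

theorem trA1B1_sub [Fintype A₁] [Fintype B₁] :
    trA1B1 (X - Y) = trA1B1 X - trA1B1 Y := by
  ext x y
  simp only [trA1B1, Matrix.sub_apply, Finset.sum_sub_distrib]

theorem trace_trA1B1 [Fintype A₀] [Fintype A₁] [Fintype B₀] [Fintype B₁] :
    (trA1B1 X).trace = X.trace := by
  simp only [Matrix.trace, Matrix.diag, trA1B1, Fintype.sum_prod_type]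
  exact Finset.sum_congr rfl fun _ _ => Finset.sum_comm

variable {X} in
theorem eq_zero_of_trA1B1_eq_zero [Finite A₀] [Fintype A₁] [Finite B₀] [Fintype B₁]
    (hX : X.PosSemidef) (htr : trA1B1 X = 0) : X = 0 := by
  have := Fintype.ofFinite A₀
  have := Fintype.ofFinite B₀
  rw [← hX.trace_eq_zero_iff, ← trace_trA1B1, htr, Matrix.trace_zero]

end PartialTrace

section PartialTraceOne

variable {A₀ A₁ B₀ B₁ : Type*}
  [DecidableEq A₀] [DecidableEq A₁] [DecidableEq B₀] [DecidableEq B₁]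


theorem trA1_one [Fintype A₁] :
    trA1 (1 : Matrix (A₀ × A₁ × B₀ × B₁) (A₀ × A₁ × B₀ × B₁) ℂ) = Fintype.card A₁ • 1 := by
  ext ⟨a₀, b⟩ ⟨a₀', b'⟩
  by_cases ha₀ : a₀ = a₀' <;> by_cases hb : b = b' <;> simp [trA1, Matrix.one_apply, ha₀, hb]

theorem trB1_one [Fintype B₁] :
    trB1 (1 : Matrix (A₀ × A₁ × B₀ × B₁) (A₀ × A₁ × B₀ × B₁) ℂ) = Fintype.card B₁ • 1 := by
  ext ⟨a₀, a₁, b₀⟩ ⟨a₀', a₁', b₀'⟩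
  by_cases ha₀ : a₀ = a₀' <;> by_cases ha₁ : a₁ = a₁' <;> by_cases hb₀ : b₀ = b₀' <;>
    simp [trB1, Matrix.one_apply, ha₀, ha₁, hb₀]

theorem trA0A1_one [Fintype A₀] [Fintype A₁] :
    trA0A1 (1 : Matrix (A₀ × A₁ × B₀ × B₁) (A₀ × A₁ × B₀ × B₁) ℂ) =
      (Fintype.card A₁ * Fintype.card A₀) • 1 := by
  ext b b'
  by_cases hb : b = b' <;> simp [trA0A1, Matrix.one_apply, hb, mul_comm]

theorem trB0B1_one [Fintype B₀] [Fintype B₁] :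
    trB0B1 (1 : Matrix (A₀ × A₁ × B₀ × B₁) (A₀ × A₁ × B₀ × B₁) ℂ) =
      (Fintype.card B₁ * Fintype.card B₀) • 1 := by
  ext ⟨a₀, a₁⟩ ⟨a₀', a₁'⟩
  by_cases ha₀ : a₀ = a₀' <;> by_cases ha₁ : a₁ = a₁' <;>
    simp [trB0B1, Matrix.one_apply, ha₀, ha₁, mul_comm]

theorem trA1B1_one [Fintype A₁] [Fintype B₁] :
    trA1B1 (1 : Matrix (A₀ × A₁ × B₀ × B₁) (A₀ × A₁ × B₀ × B₁) ℂ) =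
      (Fintype.card A₁ * Fintype.card B₁ : ℝ) • 1 := by
  ext ⟨a₀, b₀⟩ ⟨a₀', b₀'⟩
  by_cases ha₀ : a₀ = a₀' <;> by_cases hb₀ : b₀ = b₀' <;>
    simp [trA1B1, Matrix.one_apply, ha₀, hb₀]

end PartialTraceOne

section NonSignalling

variable {R A₀ A₁ B₀ B₁ : Type*} [Fintype A₀] [Fintype A₁] [Fintype B₀] [Fintype B₁]
  [DecidableEq A₀] [DecidableEq B₀] {X : Matrix (A₀ × A₁ × B₀ × B₁) (A₀ × A₁ × B₀ × B₁) ℂ}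

theorem NS.smul [DistribSMul R ℂ] [SMulCommClass R ℂ ℂ] (hX : NS X) (c : R) : NS (c • X) := by
  constructor
  · rw [trA1_smul, trA0A1_smul, piFst_smul, hX.1]
  · rw [trB1_smul, trB0B1_smul, piB0_smul, hX.2]

theorem NS.smul_iff {c : ℝ} (hc : c ≠ 0) : NS (c • X) ↔ NS X :=
  ⟨fun h => by simpa only [inv_smul_smul₀ hc] using h.smul c⁻¹, fun h => h.smul c⟩

theorem NS.one [DecidableEq A₁] [DecidableEq B₁] [Nonempty A₀] [Nonempty B₀] :
    NS (1 : Matrix (A₀ × A₁ × B₀ × B₁) (A₀ × A₁ × B₀ × B₁) ℂ) := by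
  constructor
  · rw [trA1_one, trA0A1_one, piFst_smul, mul_smul, card_smul_piFst_one]
  · rw [trB1_one, trB0B1_one, piB0_smul, mul_smul, card_smul_piB0_one]

end NonSignalling

section ChoiMatrix

variable {A₀ A₁ B₀ B₁ : Type*} [Fintype A₁] [Fintype B₁] [DecidableEq A₀] [DecidableEq B₀]
  {X : Matrix (A₀ × A₁ × B₀ × B₁) (A₀ × A₁ × B₀ × B₁) ℂ} {r : ℝ}

/-- `K` is the Choi matrix of a bipartite channel: it is positive semidefinite (complete
positivity) and `Tr_{A₁B₁} K = I_{A₀B₀}` (trace preservation). -/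
structure IsChoi (K : Matrix (A₀ × A₁ × B₀ × B₁) (A₀ × A₁ × B₀ × B₁) ℂ) : Prop where
  posSemidef : K.PosSemidef
  trA1B1_eq_one : trA1B1 K = 1

theorem IsChoi.of_trA1B1_eq_smul_one (hX : X.PosSemidef) (hr : 0 < r)
    (htr : trA1B1 X = r • 1) : IsChoi (r⁻¹ • X) where
  posSemidef := hX.smul (inv_nonneg.mpr hr.le)
  trA1B1_eq_one := by rw [trA1B1_smul, htr, inv_smul_smul₀ hr.ne']

theorem exists_isChoi [Nonempty A₁] [Nonempty B₁] :
    ∃ K : Matrix (A₀ × A₁ × B₀ × B₁) (A₀ × A₁ × B₀ × B₁) ℂ, IsChoi K := by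
  classical
  exact ⟨_, .of_trA1B1_eq_smul_one .one (by positivity) trA1B1_one⟩

theorem nonneg_of_trA1B1_eq_smul_one [Nonempty A₀] [Nonempty B₀] (hX : X.PosSemidef)
    (htr : trA1B1 X = r • 1) : 0 ≤ r := by
  let i : A₀ × B₀ := Classical.arbitrary _
  have hentry : trA1B1 X i i = r := by
    rw [htr, Matrix.smul_apply, Matrix.one_apply_eq, Complex.real_smul, mul_one]
  rw [← Complex.zero_le_real, ← hentry]
  exact Finset.sum_nonneg fun _ _ => Finset.sum_nonneg fun _ _ => hX.diag_nonneg

theorem exists_isChoi_smul_eq [Finite A₀] [Finite B₀] [Nonempty A₁] [Nonempty B₁]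
    (hX : X.PosSemidef) (hr : 0 ≤ r) (htr : trA1B1 X = r • 1) :
    ∃ K, IsChoi K ∧ r • K = X := by
  rcases hr.eq_or_lt with rfl | hr_pos
  · obtain ⟨K, hK⟩ := exists_isChoi (A₀ := A₀) (A₁ := A₁) (B₀ := B₀) (B₁ := B₁)
    rw [zero_smul] at htr
    exact ⟨K, hK, by rw [zero_smul, eq_zero_of_trA1B1_eq_zero hX htr]⟩
  · exact ⟨r⁻¹ • X, .of_trA1B1_eq_smul_one hX hr_pos htr, smul_inv_smul₀ hr_pos.ne' X⟩

end ChoiMatrix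

section Feasibility

variable {A₀ A₁ B₀ B₁ : Type*} [Fintype A₀] [Fintype A₁] [Fintype B₀] [Fintype B₁]
  [DecidableEq A₀] [DecidableEq B₀] {J : Matrix (A₀ × A₁ × B₀ × B₁) (A₀ × A₁ × B₀ × B₁) ℂ} {r : ℝ}

/-- The feasible values of the minimisation problem defining `Λ(J)`. -/
def lamFeasible (J : Matrix (A₀ × A₁ × B₀ × B₁) (A₀ × A₁ × B₀ × B₁) ℂ) : Set ℝ :=
  {l | ∃ Y, LoewnerLE J Y ∧ trA1B1 Y = l • 1 ∧ NS Y}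

/-- The feasible values of the minimisation problem defining `R(J)`. The normalisation
`1 / (1 + r)` is omitted because the non-signalling conditions are invariant under rescaling. -/
def robFeasible (J : Matrix (A₀ × A₁ × B₀ × B₁) (A₀ × A₁ × B₀ × B₁) ℂ) : Set ℝ :=
  {r | 0 ≤ r ∧ ∃ K, IsChoi K ∧ NS (J + r • K)}

theorem rob_eq_sInf_robFeasible [DecidableEq A₁] [DecidableEq B₁]
    (J : Matrix (A₀ × A₁ × B₀ × B₁) (A₀ × A₁ × B₀ × B₁) ℂ) :
    Rob J = sInf (robFeasible J) := by
  refine congrArg sInf (Set.ext fun r => and_congr_right fun hr => exists_congr fun K => ?_)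
  have hscale : 1 / (1 + r) ≠ 0 := by positivity
  rw [NS.smul_iff hscale, ← and_assoc]
  exact and_congr_left' ⟨fun h => ⟨h.1, h.2⟩, fun h => ⟨h.1, h.2⟩⟩

theorem lamFeasible_nonempty [Nonempty A₀] [Nonempty B₀] (hJ : J.IsHermitian) :
    (lamFeasible J).Nonempty := by
  classical
  obtain ⟨c, hc⟩ := exists_loewnerLE_smul_one hJ
  exact ⟨_, c • 1, hc, by rw [trA1B1_smul, trA1B1_one, smul_smul], NS.one.smul c⟩

theorem robFeasible_bddBelow (J : Matrix (A₀ × A₁ × B₀ × B₁) (A₀ × A₁ × B₀ × B₁) ℂ) :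
    BddBelow (robFeasible J) :=
  ⟨0, fun _ hr => hr.1⟩

theorem one_add_mem_lamFeasible (hJ : trA1B1 J = 1) (hr : r ∈ robFeasible J) :
    1 + r ∈ lamFeasible J := by
  obtain ⟨hr_nonneg, K, hK, hNS⟩ := hr
  refine ⟨J + r • K, ?_, ?_, hNS⟩
  · rw [LoewnerLE, add_sub_cancel_left]
    exact hK.posSemidef.smul hr_nonneg
  · rw [trA1B1_add, trA1B1_smul, hJ, hK.trA1B1_eq_one, add_smul, one_smul]

theorem sub_one_mem_robFeasible [Nonempty A₀] [Nonempty A₁] [Nonempty B₀] [Nonempty B₁]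
    {l : ℝ} (hJ : trA1B1 J = 1) (hl : l ∈ lamFeasible J) : l - 1 ∈ robFeasible J := by
  obtain ⟨Y, hJY, htr, hNS⟩ := hl
  have htr_sub : trA1B1 (Y - J) = (l - 1) • 1 := by
    rw [trA1B1_sub, htr, hJ, sub_smul, one_smul]
  have hl_nonneg : 0 ≤ l - 1 := nonneg_of_trA1B1_eq_smul_one hJY htr_sub
  obtain ⟨K, hK, hKY⟩ := exists_isChoi_smul_eq hJY hl_nonneg htr_sub
  exact ⟨hl_nonneg, K, hK, by rwa [hKY, add_sub_cancel]⟩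

theorem addLeft_one_image_robFeasible [Nonempty A₀] [Nonempty A₁] [Nonempty B₀] [Nonempty B₁]
    (hJ : trA1B1 J = 1) : OrderIso.addLeft (1 : ℝ) '' robFeasible J = lamFeasible J := by
  ext l
  constructor
  · rintro ⟨r, hr, rfl⟩
    exact one_add_mem_lamFeasible hJ hr
  · exact fun hl => ⟨l - 1, sub_one_mem_robFeasible hJ hl, add_sub_cancel 1 l⟩

theorem lam_eq_one_add_rob_general [DecidableEq A₁] [DecidableEq B₁]
    [Nonempty A₀] [Nonempty A₁] [Nonempty B₀] [Nonempty B₁]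
    (hJ : J.IsHermitian) (hTP : trA1B1 J = 1) : Lam J = 1 + Rob J := by
  have himage := addLeft_one_image_robFeasible hTP
  have hne : (robFeasible J).Nonempty := by
    rw [← Set.image_nonempty, himage]
    exact lamFeasible_nonempty hJ
  calc
    Lam J = sInf (lamFeasible J) := rfl
    _ = sInf (OrderIso.addLeft (1 : ℝ) '' robFeasible J) := by rw [himage]
    _ = 1 + sInf (robFeasible J) :=
      ((OrderIso.addLeft (1 : ℝ)).map_csInf' hne (robFeasible_bddBelow J)).symm
    _ = 1 + Rob J := by rw [rob_eq_sInf_robFeasible]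

end Feasibility

/-- Relation between the max-relative entropy and the robustness of bidirectional
classical communication: `Λ(J) = 1 + R(J)` for the Choi matrix `J` of a bipartite
channel. -/
theorem lam_eq_one_add_rob
    {A₀ A₁ B₀ B₁ : Type*}
    [Fintype A₀] [Fintype A₁] [Fintype B₀] [Fintype B₁]
    [DecidableEq A₀] [DecidableEq A₁] [DecidableEq B₀] [DecidableEq B₁]
    [Nonempty A₀] [Nonempty A₁] [Nonempty B₀] [Nonempty B₁]
    (J : Matrix (A₀ × A₁ × B₀ × B₁) (A₀ × A₁ × B₀ × B₁) ℂ)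
    (hJ : J.PosSemidef) (hTP : trA1B1 J = 1) :
    Lam J = 1 + Rob J :=
  lam_eq_one_add_rob_general hJ.isHermitian hTP
end
end

section
/- The max-relative entropy of bidirectional classical communication of the noiseless bidirectional classical channel Υ_m is at most log m: let m ≥ 2, A₀ = A₁ = B₀ = B₁ = Fin m, and let C = C_{A₀B₁} ⊠ C_{B₀A₁} (indexed by A₀ × A₁ × B₀ × B₁) be the Choi matrix of Υ_m, where C_{ST} = ∑_k E_{kk} ⊗ E_{kk}. Then (m : ℝ) belongs to the feasible set defining Λ(C) — explicitly, Y := m • ((1/m) • C + (1/(m(m−1))) • ((I − C)_{A₀B₁} ⊠ (I − C)_{B₀A₁})) satisfies C ≤ Y, Tr_{A₁B₁} Y = m • I_{A₀B₀}, Tr_{A₁} Y = π_{A₀} ⊗ Tr_{A₀A₁} Y and Tr_{B₁} Y = π_{B₀} ⊗ Tr_{B₀B₁} Y — and consequently Λ(C) ≤ m. -/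
open Matrix
open scoped ComplexOrder

noncomputable section

/-- `C_{ST} = ∑ k, E_{kk} ⊗ E_{kk}`, the Choi matrix of the noiseless classical channel
on `m` messages (indexed by `Fin m × Fin m`). -/
def classChoi (m : ℕ) : Matrix (Fin m × Fin m) (Fin m × Fin m) ℂ :=
  fun x y => if x.1 = x.2 ∧ y.1 = y.2 ∧ x.1 = y.1 then 1 else 0

/-- `C = C_{A₀B₁} ⊠ C_{B₀A₁}`, the Choi matrix of the noiseless bidirectional classical
channel `Υ_m`, indexed by `A₀ × A₁ × B₀ × B₁` (all equal to `Fin m`). -/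
def upsChoi (m : ℕ) : Matrix (Fin m × Fin m × Fin m × Fin m) (Fin m × Fin m × Fin m × Fin m) ℂ :=
  fun x y =>
    classChoi m (x.1, x.2.2.2) (y.1, y.2.2.2) * classChoi m (x.2.2.1, x.2.1) (y.2.2.1, y.2.1)

/-- `J′ = (1/m) • (C_{A₀B₁} ⊠ C_{B₀A₁})
      + (1/(m(m−1))) • ((I − C)_{A₀B₁} ⊠ (I − C)_{B₀A₁})`,
indexed by `A₀ × A₁ × B₀ × B₁` (all equal to `Fin m`). -/
def Jprime (m : ℕ) : Matrix (Fin m × Fin m × Fin m × Fin m) (Fin m × Fin m × Fin m × Fin m) ℂ :=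
  fun x y =>
    (m : ℂ)⁻¹ *
      (classChoi m (x.1, x.2.2.2) (y.1, y.2.2.2) *
        classChoi m (x.2.2.1, x.2.1) (y.2.2.1, y.2.1)) +
    ((m : ℂ) * ((m : ℂ) - 1))⁻¹ *
      ((1 - classChoi m) (x.1, x.2.2.2) (y.1, y.2.2.2) *
        (1 - classChoi m) (x.2.2.1, x.2.1) (y.2.2.1, y.2.1))

/-! If `X` and `Z` are Choi matrices of channels with output dimension `d`, then tracing the output
out of `1 - Z` leaves `(d - 1) • 1`, so tracing `A₁` out of
`Y = X ⊠ Z + (d - 1)⁻¹ • (1 - X) ⊠ (1 - Z)` leaves `X ⊗ 1 + (1 - X) ⊗ 1 = 1`, and symmetrically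
for `B₁`. A matrix whose `A₁`- and `B₁`-marginals are identities is non-signalling, and `Y`
dominates `X ⊠ Z` as soon as `X, Z ≤ 1`, as holds for the diagonal 0-1 matrix of the noiseless
classical channel. -/

open scoped Kronecker

/-- The Choi matrices, on input `S` and output `T`, of quantum channels: complete positivity is
positive semidefiniteness, and trace preservation is the partial trace condition. -/
structure IsChannelChoi {S T : Type*} [DecidableEq S] [Fintype T]
    (X : Matrix (S × T) (S × T) ℂ) : Prop where
  posSemidef : X.PosSemidef
  trOut_eq_one : trOut X = 1

section Marginals

variable {S T : Type*} [DecidableEq S] [DecidableEq T]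

lemma trOut_one [Fintype T] :
    trOut (1 : Matrix (S × T) (S × T) ℂ) = (Fintype.card T : ℂ) • 1 := by
  ext s s'
  simp [trOut, Matrix.one_apply]

lemma trInp_one [Fintype S] :
    trInp (1 : Matrix (S × T) (S × T) ℂ) = (Fintype.card S : ℂ) • 1 := by
  ext t t'
  simp [trInp, Matrix.one_apply]

lemma piFst_card_smul_one [Fintype S] [Nonempty S] :
    piFst ((Fintype.card S : ℂ) • (1 : Matrix T T ℂ)) = (1 : Matrix (S × T) (S × T) ℂ) := by
  ext ⟨s, t⟩ ⟨s', t'⟩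
  simp [piFst, Matrix.one_apply, ← ite_and, and_comm]

lemma trOut_one_sub [Fintype T] {X : Matrix (S × T) (S × T) ℂ} (hX : trOut X = 1) :
    trOut (1 - X) = ((Fintype.card T : ℂ) - 1) • 1 := by
  have trOut_sub : trOut (1 - X) = trOut (1 : Matrix (S × T) (S × T) ℂ) - trOut X := by
    ext s s'
    simp only [trOut, Matrix.sub_apply, Finset.sum_sub_distrib]
  rw [trOut_sub, trOut_one, hX, sub_smul, one_smul]

end Marginals

lemma LoewnerLE.posSemidef {n : Type*} [Fintype n] {M N : Matrix n n ℂ} (hMN : LoewnerLE M N)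
    (hM : M.PosSemidef) : N.PosSemidef := by
  simpa only [sub_add_cancel] using Matrix.PosSemidef.add hMN hM

section FourSystems

variable {A₀ A₁ B₀ B₁ : Type*}

lemma trA1_add [Fintype A₁] (J K : Matrix (A₀ × A₁ × B₀ × B₁) (A₀ × A₁ × B₀ × B₁) ℂ) :
    trA1 (J + K) = trA1 J + trA1 K := by
  ext x y
  simp only [trA1, Matrix.add_apply, Finset.sum_add_distrib]

lemma trA1_smul_s7 [Fintype A₁] (c : ℂ) (J : Matrix (A₀ × A₁ × B₀ × B₁) (A₀ × A₁ × B₀ × B₁) ℂ) :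
    trA1 (c • J) = c • trA1 J := by
  ext x y
  simp only [trA1, Matrix.smul_apply, Finset.smul_sum]

lemma trB1_add [Fintype B₁] (J K : Matrix (A₀ × A₁ × B₀ × B₁) (A₀ × A₁ × B₀ × B₁) ℂ) :
    trB1 (J + K) = trB1 J + trB1 K := by
  ext x y
  simp only [trB1, Matrix.add_apply, Finset.sum_add_distrib]

lemma trB1_smul_s7 [Fintype B₁] (c : ℂ) (J : Matrix (A₀ × A₁ × B₀ × B₁) (A₀ × A₁ × B₀ × B₁) ℂ) :
    trB1 (c • J) = c • trB1 J := by
  ext x y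
  simp only [trB1, Matrix.smul_apply, Finset.smul_sum]

section NonSignalling

variable {J : Matrix (A₀ × A₁ × B₀ × B₁) (A₀ × A₁ × B₀ × B₁) ℂ}

lemma trA0A1_eq_trInp_trA1 [Fintype A₀] [Fintype A₁] : trA0A1 J = trInp (trA1 J) := rfl

lemma trB0B1_eq_trOut_trB1 [Fintype B₀] [Fintype B₁] :
    trB0B1 J = trOut ((trB1 J).submatrix (Equiv.prodAssoc A₀ A₁ B₀) (Equiv.prodAssoc A₀ A₁ B₀)) :=
  rfl

lemma piB0_card_smul_one [Fintype B₀] [Nonempty B₀] [DecidableEq A₀] [DecidableEq A₁]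
    [DecidableEq B₀] :
    piB0 ((Fintype.card B₀ : ℂ) • (1 : Matrix (A₀ × A₁) (A₀ × A₁) ℂ)) =
      (1 : Matrix (A₀ × A₁ × B₀) (A₀ × A₁ × B₀) ℂ) := by
  ext ⟨a₀, a₁, b₀⟩ ⟨a₀', a₁', b₀'⟩
  simp [piB0, Matrix.one_apply, ← ite_and, and_assoc]

variable [Fintype A₁] [Fintype B₁] [DecidableEq A₀] [DecidableEq A₁] [DecidableEq B₀]

lemma ns_of_trA1_eq_one_of_trB1_eq_one [Fintype A₀] [Fintype B₀] [DecidableEq B₁]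
    [Nonempty A₀] [Nonempty B₀] (hA : trA1 J = 1) (hB : trB1 J = 1) : NS J := by
  constructor
  · rw [trA0A1_eq_trInp_trA1, hA, trInp_one, piFst_card_smul_one]
  · rw [trB0B1_eq_trOut_trB1, hB, Matrix.submatrix_one_equiv, trOut_one, piB0_card_smul_one]

lemma trA1B1_eq_card_smul_one_of_trB1_eq_one (hB : trB1 J = 1) :
    trA1B1 J = (Fintype.card A₁ : ℂ) • 1 := by
  let e : (A₀ × B₀) × A₁ → A₀ × A₁ × B₀ := fun x => (x.1.1, x.2, x.1.2)
  have he : Function.Injective e := by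
    rintro ⟨⟨a₀, b₀⟩, a₁⟩ ⟨⟨a₀', b₀'⟩, a₁'⟩ h
    simp_all [e]
  calc trA1B1 J = trOut ((trB1 J).submatrix e e) := rfl
    _ = (Fintype.card A₁ : ℂ) • 1 := by rw [hB, Matrix.submatrix_one e he, trOut_one]

end NonSignalling

section Value

variable [Fintype A₁] [Fintype B₁] [DecidableEq A₀] [DecidableEq B₀] [Nonempty A₀] [Nonempty B₀]
  {J Y : Matrix (A₀ × A₁ × B₀ × B₁) (A₀ × A₁ × B₀ × B₁) ℂ} {l : ℝ}

lemma nonneg_of_trA1B1_eq_smul_one_s7 (hY : Y.PosSemidef)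
    (htr : trA1B1 Y = l • (1 : Matrix (A₀ × B₀) (A₀ × B₀) ℂ)) : 0 ≤ l := by
  obtain ⟨i⟩ : Nonempty (A₀ × B₀) := inferInstance
  have hdiag : 0 ≤ trA1B1 Y i i :=
    Finset.sum_nonneg fun _ _ => Finset.sum_nonneg fun _ _ => hY.diag_nonneg
  simpa [htr] using hdiag

lemma lam_le_of_feasible [Fintype A₀] [Fintype B₀] (hJ : J.PosSemidef) (hJY : LoewnerLE J Y)
    (htr : trA1B1 Y = l • (1 : Matrix (A₀ × B₀) (A₀ × B₀) ℂ)) (hY : NS Y) : Lam J ≤ l := by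
  refine csInf_le ⟨0, ?_⟩ ⟨Y, hJY, htr, hY⟩
  rintro l' ⟨Y', hJY', htr', -⟩
  exact nonneg_of_trA1B1_eq_smul_one_s7 (hJY'.posSemidef hJ) htr'

end Value

section CrossKronecker

/-- `X_{A₀B₁} ⊠ Z_{B₀A₁}`: the Choi matrix of the bipartite channel acting as `X` from Alice to
Bob and as `Z` from Bob to Alice, with the subsystems reordered to `A₀ × A₁ × B₀ × B₁`. -/
def crossKronecker (X : Matrix (A₀ × B₁) (A₀ × B₁) ℂ) (Z : Matrix (B₀ × A₁) (B₀ × A₁) ℂ) :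
    Matrix (A₀ × A₁ × B₀ × B₁) (A₀ × A₁ × B₀ × B₁) ℂ :=
  (X ⊗ₖ Z).submatrix (fun x => ((x.1, x.2.2.2), (x.2.2.1, x.2.1)))
    (fun x => ((x.1, x.2.2.2), (x.2.2.1, x.2.1)))

variable {X : Matrix (A₀ × B₁) (A₀ × B₁) ℂ} {Z : Matrix (B₀ × A₁) (B₀ × A₁) ℂ}

lemma posSemidef_crossKronecker [Finite A₀] [Finite A₁] [Finite B₀] [Finite B₁]
    (hX : X.PosSemidef) (hZ : Z.PosSemidef) : (crossKronecker X Z).PosSemidef :=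
  (hX.kronecker hZ).submatrix _

lemma trA1_crossKronecker [Fintype A₁] :
    trA1 (crossKronecker X Z) =
      (X ⊗ₖ trOut Z).submatrix (fun x => ((x.1, x.2.2), x.2.1))
        (fun x => ((x.1, x.2.2), x.2.1)) := by
  ext x y
  simp only [trA1, crossKronecker, trOut, submatrix_apply, kronecker_apply, Finset.mul_sum]

lemma trB1_crossKronecker [Fintype B₁] :
    trB1 (crossKronecker X Z) =
      (trOut X ⊗ₖ Z).submatrix (fun x => (x.1, (x.2.2, x.2.1)))
        (fun x => (x.1, (x.2.2, x.2.1))) := by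
  ext x y
  simp only [trB1, crossKronecker, trOut, submatrix_apply, kronecker_apply, Finset.sum_mul]

end CrossKronecker

section NonSignallingMajorant

variable [DecidableEq A₀] [DecidableEq A₁] [DecidableEq B₀] [DecidableEq B₁]

/-- `X ⊠ Z + (d - 1)⁻¹ • (1 - X) ⊠ (1 - Z)`: a feasible point of the program defining
`Lam (X ⊠ Z)` when `d` is the common dimension of the outputs `A₁` and `B₁`. -/
def nonSignallingMajorant (d : ℕ) (X : Matrix (A₀ × B₁) (A₀ × B₁) ℂ)
    (Z : Matrix (B₀ × A₁) (B₀ × A₁) ℂ) : Matrix (A₀ × A₁ × B₀ × B₁) (A₀ × A₁ × B₀ × B₁) ℂ :=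
  crossKronecker X Z + ((d : ℂ) - 1)⁻¹ • crossKronecker (1 - X) (1 - Z)

variable {d : ℕ} {X : Matrix (A₀ × B₁) (A₀ × B₁) ℂ} {Z : Matrix (B₀ × A₁) (B₀ × A₁) ℂ}

lemma loewnerLE_nonSignallingMajorant [Fintype A₀] [Fintype A₁] [Fintype B₀] [Fintype B₁]
    (hd : 1 ≤ d) (hX : LoewnerLE X 1) (hZ : LoewnerLE Z 1) :
    LoewnerLE (crossKronecker X Z) (nonSignallingMajorant d X Z) := by
  have hc : (0 : ℂ) ≤ ((d : ℂ) - 1)⁻¹ := inv_nonneg.2 (sub_nonneg.2 (by exact_mod_cast hd))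
  simpa only [LoewnerLE, nonSignallingMajorant, add_sub_cancel_left] using
    (posSemidef_crossKronecker hX hZ).smul hc

lemma trA1_nonSignallingMajorant [Fintype A₁] (hA₁ : Fintype.card A₁ = d) (hd : d ≠ 1)
    (hZ : trOut Z = 1) : trA1 (nonSignallingMajorant d X Z) = 1 := by
  let e : A₀ × B₀ × B₁ → (A₀ × B₁) × B₀ := fun x => ((x.1, x.2.2), x.2.1)
  have he : Function.Injective e := by
    rintro ⟨a₀, b₀, b₁⟩ ⟨a₀', b₀', b₁'⟩ h
    simp_all [e]
  have hd' : (d : ℂ) - 1 ≠ 0 := sub_ne_zero.2 (by exact_mod_cast hd)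
  calc trA1 (nonSignallingMajorant d X Z)
      = trA1 (crossKronecker X Z) + ((d : ℂ) - 1)⁻¹ • trA1 (crossKronecker (1 - X) (1 - Z)) := by
        rw [nonSignallingMajorant, trA1_add, trA1_smul_s7]
    _ = (X ⊗ₖ 1 + ((d : ℂ) - 1)⁻¹ • ((1 - X) ⊗ₖ (((d : ℂ) - 1) • 1))).submatrix e e := by
        rw [trA1_crossKronecker, trA1_crossKronecker, hZ, trOut_one_sub hZ, hA₁]
        rfl
    _ = ((X + (1 - X)) ⊗ₖ 1).submatrix e e := by
        rw [kronecker_smul, inv_smul_smul₀ hd', add_kronecker]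
    _ = 1 := by rw [add_sub_cancel, one_kronecker_one, submatrix_one e he]

lemma trB1_nonSignallingMajorant [Fintype B₁] (hB₁ : Fintype.card B₁ = d) (hd : d ≠ 1)
    (hX : trOut X = 1) : trB1 (nonSignallingMajorant d X Z) = 1 := by
  let e : A₀ × A₁ × B₀ → A₀ × B₀ × A₁ := fun x => (x.1, (x.2.2, x.2.1))
  have he : Function.Injective e := by
    rintro ⟨a₀, a₁, b₀⟩ ⟨a₀', a₁', b₀'⟩ h
    simp_all [e]
  have hd' : (d : ℂ) - 1 ≠ 0 := sub_ne_zero.2 (by exact_mod_cast hd)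
  calc trB1 (nonSignallingMajorant d X Z)
      = trB1 (crossKronecker X Z) + ((d : ℂ) - 1)⁻¹ • trB1 (crossKronecker (1 - X) (1 - Z)) := by
        rw [nonSignallingMajorant, trB1_add, trB1_smul_s7]
    _ = (1 ⊗ₖ Z + ((d : ℂ) - 1)⁻¹ • ((((d : ℂ) - 1) • 1) ⊗ₖ (1 - Z))).submatrix e e := by
        rw [trB1_crossKronecker, trB1_crossKronecker, hX, trOut_one_sub hX, hB₁]
        rfl
    _ = (1 ⊗ₖ (Z + (1 - Z))).submatrix e e := by
        rw [smul_kronecker, inv_smul_smul₀ hd', kronecker_add]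
    _ = 1 := by rw [add_sub_cancel, one_kronecker_one, submatrix_one e he]

theorem lam_upsChoi_le_general [Fintype A₀] [Fintype A₁] [Fintype B₀] [Fintype B₁]
    [Nonempty A₀] [Nonempty B₀] (hd : 1 < d)
    (hA₁ : Fintype.card A₁ = d) (hB₁ : Fintype.card B₁ = d)
    (hX : IsChannelChoi X) (hX_le : LoewnerLE X 1)
    (hZ : IsChannelChoi Z) (hZ_le : LoewnerLE Z 1) :
    (LoewnerLE (crossKronecker X Z) (nonSignallingMajorant d X Z) ∧
      trA1B1 (nonSignallingMajorant d X Z) =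
        (d : ℝ) • (1 : Matrix (A₀ × B₀) (A₀ × B₀) ℂ) ∧
      NS (nonSignallingMajorant d X Z)) ∧
    Lam (crossKronecker X Z) ≤ d := by
  have hA := trA1_nonSignallingMajorant (X := X) hA₁ hd.ne' hZ.trOut_eq_one
  have hB := trB1_nonSignallingMajorant (Z := Z) hB₁ hd.ne' hX.trOut_eq_one
  have hle := loewnerLE_nonSignallingMajorant hd.le hX_le hZ_le
  have htr : trA1B1 (nonSignallingMajorant d X Z) =
      (d : ℝ) • (1 : Matrix (A₀ × B₀) (A₀ × B₀) ℂ) := by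
    rw [trA1B1_eq_card_smul_one_of_trB1_eq_one hB, hA₁, Nat.cast_smul_eq_nsmul,
      Nat.cast_smul_eq_nsmul]
  have hNS := ns_of_trA1_eq_one_of_trB1_eq_one hA hB
  exact ⟨⟨hle, htr, hNS⟩,
    lam_le_of_feasible (posSemidef_crossKronecker hX.posSemidef hZ.posSemidef) hle htr hNS⟩

end NonSignallingMajorant

end FourSystems

section ClassicalChannel

variable (m : ℕ)

lemma classChoi_eq_diagonal :
    classChoi m = diagonal fun x => if x.1 = x.2 then (1 : ℂ) else 0 := by
  ext ⟨i, j⟩ ⟨k, l⟩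
  simp only [classChoi, diagonal_apply, Prod.mk.injEq]
  grind

lemma posSemidef_classChoi : (classChoi m).PosSemidef := by
  rw [classChoi_eq_diagonal]
  refine PosSemidef.diagonal fun x => ?_
  dsimp only [Pi.zero_apply]
  split_ifs <;> simp

lemma classChoi_loewnerLE_one : LoewnerLE (classChoi m) 1 := by
  rw [LoewnerLE, classChoi_eq_diagonal, ← diagonal_one, diagonal_sub]
  refine PosSemidef.diagonal fun x => ?_
  dsimp only [Pi.zero_apply]
  split_ifs <;> simp

lemma trOut_classChoi : trOut (classChoi m) = 1 := by
  ext i j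
  calc trOut (classChoi m) i j = ∑ k, if k = j then (if i = j then (1 : ℂ) else 0) else 0 :=
        Finset.sum_congr rfl fun k _ => by simp only [classChoi]; grind
    _ = (1 : Matrix (Fin m) (Fin m) ℂ) i j := by
        rw [Finset.sum_ite_eq_of_mem' _ _ _ (Finset.mem_univ j), Matrix.one_apply]

lemma isChannelChoi_classChoi : IsChannelChoi (classChoi m) :=
  ⟨posSemidef_classChoi m, trOut_classChoi m⟩

lemma upsChoi_eq_crossKronecker : upsChoi m = crossKronecker (classChoi m) (classChoi m) := rfl

variable {m} in
lemma smul_jprime_eq_nonSignallingMajorant (hm : m ≠ 0) :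
    (m : ℂ) • Jprime m = nonSignallingMajorant m (classChoi m) (classChoi m) := by
  have hm' : (m : ℂ) ≠ 0 := Nat.cast_ne_zero.2 hm
  ext x y
  simp only [Jprime, nonSignallingMajorant, crossKronecker, Matrix.smul_apply, Matrix.add_apply,
    submatrix_apply, kronecker_apply, smul_eq_mul, mul_inv, mul_add, ← mul_assoc,
    mul_inv_cancel₀ hm', one_mul]

end ClassicalChannel

/-- The max-relative entropy of bidirectional classical communication of the noiseless
bidirectional classical channel `Υ_m` is at most `log m`: the matrix
`Y = m • ((1/m) • C + (1/(m(m−1))) • ((I − C)_{A₀B₁} ⊠ (I − C)_{B₀A₁}))` is feasible for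
`Λ` at level `m`, and consequently `Λ(C) ≤ m`. -/
theorem lam_upsChoi_le (m : ℕ) (hm : 2 ≤ m) :
    (LoewnerLE (upsChoi m) ((m : ℂ) • Jprime m) ∧
      trA1B1 ((m : ℂ) • Jprime m) =
        (m : ℝ) • (1 : Matrix (Fin m × Fin m) (Fin m × Fin m) ℂ) ∧
      NS ((m : ℂ) • Jprime m)) ∧
    Lam (upsChoi m) ≤ m := by
  have : NeZero m := ⟨by lia⟩
  rw [smul_jprime_eq_nonSignallingMajorant (NeZero.ne m), upsChoi_eq_crossKronecker]
  exact lam_upsChoi_le_general hm (Fintype.card_fin m) (Fintype.card_fin m)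
    (isChannelChoi_classChoi m) (classChoi_loewnerLE_one m)
    (isChannelChoi_classChoi m) (classChoi_loewnerLE_one m)
end
end

section
/- Additivity of the channel's bipartite conditional min-entropy: let K₁, indexed by A₀ × B₀ × B₁, and K₂, indexed by A₀' × B₀' × B₁', be positive semidefinite matrices with Tr_{B₁} K₁ = I_{A₀B₀} and Tr_{B₁'} K₂ = I_{A₀'B₀'} (i.e. each K_i = Tr over the A-output of the Choi matrix of a bipartite channel). Then μ(K₁ ⊠ K₂) = μ(K₁) · μ(K₂), where K₁ ⊠ K₂ is the Kronecker product reindexed to (A₀ × A₀') × (B₀ × B₀') × (B₁ × B₁'). Equivalently, the bipartite conditional min-entropy H_min(𝐀|𝐁) = −log μ is additive under tensor products of bipartite channels. -/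
open Matrix
open scoped ComplexOrder

noncomputable section

/-- The optimal value `μ(K)` of the SDP whose negative logarithm is the bipartite
conditional min-entropy `H_min(𝐀|𝐁)` (for `K = Tr_{A₁} J` of a channel Choi matrix `J`). -/
def mu {A₀ B₀ B₁ : Type*} [Fintype A₀] [Fintype B₀] [Fintype B₁]
    [DecidableEq A₀] [DecidableEq B₀]
    (K : Matrix (A₀ × B₀ × B₁) (A₀ × B₀ × B₁) ℂ) : ℝ :=
  sInf {m : ℝ | ∃ X : Matrix (B₀ × B₁) (B₀ × B₁) ℂ,
    trOut X = m • (1 : Matrix B₀ B₀ ℂ) ∧ LoewnerLE K (idFst X)}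

/-- `Tr_{B₁}` of a matrix on `A₀ × B₀ × B₁`. -/
def trLast3 {A₀ B₀ B₁ : Type*} [Fintype B₁]
    (K : Matrix (A₀ × B₀ × B₁) (A₀ × B₀ × B₁) ℂ) : Matrix (A₀ × B₀) (A₀ × B₀) ℂ :=
  fun x y => ∑ b : B₁, K (x.1, x.2, b) (y.1, y.2, b)

/-- Kronecker product of matrices on three-fold systems, reindexed to
`(A₀ × A₀') × (B₀ × B₀') × (B₁ × B₁')`. -/
def kron3 {A₀ B₀ B₁ A₀' B₀' B₁' : Type*}
    (K₁ : Matrix (A₀ × B₀ × B₁) (A₀ × B₀ × B₁) ℂ)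
    (K₂ : Matrix (A₀' × B₀' × B₁') (A₀' × B₀' × B₁') ℂ) :
    Matrix ((A₀ × A₀') × (B₀ × B₀') × (B₁ × B₁'))
      ((A₀ × A₀') × (B₀ × B₀') × (B₁ × B₁')) ℂ :=
  fun x y =>
    K₁ (x.1.1, x.2.1.1, x.2.2.1) (y.1.1, y.2.1.1, y.2.2.1) *
    K₂ (x.1.2, x.2.1.2, x.2.2.2) (y.1.2, y.2.1.2, y.2.2.2)

/-!
`mu K` is the value of a semidefinite program whose dual maximizes `tr (G K)` over `G ≥ 0` with
`Tr_A G = σ ⊗ I_C`, `tr σ = 1`. There is no duality gap: `mu` is sublinear on Hermitian matrices,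
so by Hahn–Banach some linear functional is dominated by `mu` and agrees with it at `K`; testing
the domination on `-P` for `P ≥ 0` and on `± I_A ⊗ Z` shows that this functional is the trace
against a dual feasible `G`. Products of primal feasible points are primal feasible because
`(I ⊗ X) ⊠ (I ⊗ Y) - K ⊠ L = (I ⊗ X - K) ⊠ (I ⊗ Y) + K ⊠ (I ⊗ Y - L)`, which gives `≤`; products
of dual feasible points are dual feasible, which gives `≥`.
-/

open scoped Kronecker ComplexStarModule

lemma le_sInf_mul_sInf {s t : Set ℝ} {a : ℝ} (hs : s.Nonempty) (ht : t.Nonempty)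
    (hs₀ : ∀ x ∈ s, 0 ≤ x) (ht₀ : ∀ y ∈ t, 0 ≤ y) (h : ∀ x ∈ s, ∀ y ∈ t, a ≤ x * y) :
    a ≤ sInf s * sInf t := by
  rw [← smul_eq_mul, ← Real.sInf_smul_of_nonneg (Real.sInf_nonneg hs₀)]
  refine le_csInf ht.smul_set ?_
  rintro _ ⟨y, hy, rfl⟩
  change a ≤ sInf s * y
  rw [mul_comm, ← smul_eq_mul, ← Real.sInf_smul_of_nonneg (ht₀ y hy)]
  refine le_csInf hs.smul_set ?_
  rintro _ ⟨x, hx, rfl⟩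
  exact (h x hx y hy).trans_eq (mul_comm x y)

lemma exists_linearMap_eq_of_sublinear {E : Type*} [AddCommGroup E] [Module ℝ E] (p : E → ℝ)
    (p_smul : ∀ c : ℝ, 0 < c → ∀ x, p (c • x) = c * p x)
    (p_add : ∀ x y, p (x + y) ≤ p x + p y) (x : E) :
    ∃ g : E →ₗ[ℝ] ℝ, g x = p x ∧ ∀ y, g y ≤ p y := by
  have p_zero : p 0 = 0 := by
    have := p_smul 2 two_pos 0
    rw [smul_zero] at this
    linarith
  rcases eq_or_ne x 0 with rfl | hx
  · obtain ⟨g, -, hg⟩ := exists_extension_of_le_sublinear ⟨⊥, 0⟩ p p_smul p_add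
      fun y => by simp [(Submodule.mem_bot ℝ).1 y.2, p_zero]
    exact ⟨g, by simp [p_zero], hg⟩
  have smul_le (c : ℝ) : c * p x ≤ p (c • x) := by
    rcases lt_trichotomy c 0 with hc | rfl | hc
    · have h_add := p_add (c • x) ((-c) • x)
      rw [neg_smul, add_neg_cancel, p_zero, ← neg_smul, p_smul _ (neg_pos.2 hc)] at h_add
      linarith
    · simp [p_zero]
    · exact (p_smul c hc x).ge
  obtain ⟨g, hgx, hg⟩ := exists_extension_of_le_sublinear
    (LinearPMap.mkSpanSingleton (σ := RingHom.id ℝ) x (p x) hx) p p_smul p_add (by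
      rintro ⟨_, hy⟩
      obtain ⟨c, rfl⟩ := Submodule.mem_span_singleton.1 hy
      rw [LinearPMap.mkSpanSingleton'_apply]
      exact smul_le c)
  refine ⟨g, ?_, hg⟩
  exact (hgx ⟨x, Submodule.mem_span_singleton_self x⟩).trans
    (LinearPMap.mkSpanSingleton'_apply_self _ _ _ _)

section MatrixTrace

variable {m n : Type*} [Fintype m] [Fintype n]

lemma exists_trace_mul_eq {R : Type*} [CommSemiring R] (φ : Matrix m n R →ₗ[R] R) :
    ∃ G : Matrix n m R, ∀ Y, (G * Y).trace = φ Y := by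
  classical
  refine ⟨Matrix.of fun j i => φ (Matrix.single i j 1), fun Y => ?_⟩
  have map_single (i : m) (j : n) :
      φ (Matrix.single i j (Y i j)) = φ (Matrix.single i j 1) * Y i j := by
    rw [mul_comm, ← smul_eq_mul, ← map_smul, smul_single, smul_eq_mul, mul_one]
  conv_rhs => rw [matrix_eq_sum_single Y]
  simp only [map_sum, map_single, Matrix.trace, diag_apply, Matrix.mul_apply, of_apply]
  exact Finset.sum_comm

lemma eq_of_forall_isHermitian_trace_mul_eq {M N : Matrix n n ℂ}
    (h : ∀ H : Matrix n n ℂ, H.IsHermitian → (M * H).trace = (N * H).trace) : M = N := by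
  refine Matrix.ext_iff_trace_mul_right.2 fun Y => ?_
  rw [← realPart_add_I_smul_imaginaryPart Y]
  simp only [mul_add, Matrix.mul_smul, trace_add, trace_smul, h _ (ℜ Y).2, h _ (ℑ Y).2]

lemma exists_isHermitian_trace_mul_eq (g : selfAdjoint (Matrix n n ℂ) →ₗ[ℝ] ℝ) :
    ∃ G : Matrix n n ℂ, G.IsHermitian ∧
      ∀ H (hH : H.IsHermitian), (G * H).trace = (g ⟨H, hH⟩ : ℂ) := by
  classical
  obtain ⟨G, hG⟩ := exists_trace_mul_eq (Module.Dual.extendRCLike (𝕜 := ℂ) (g ∘ₗ realPart))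
  have trace_mul (H : Matrix n n ℂ) (hH : H.IsHermitian) :
      (G * H).trace = (g ⟨H, hH⟩ : ℂ) := by
    have hre : ℜ H = ⟨H, hH⟩ := Subtype.ext (IsSelfAdjoint.coe_realPart hH)
    have him : ℑ H = 0 := imaginaryPart_eq_zero_iff.2 hH
    simp [hG, Module.Dual.extendRCLike_apply, hre, him]
  refine ⟨G, eq_of_forall_isHermitian_trace_mul_eq fun H hH => ?_, trace_mul⟩
  calc (Gᴴ * H).trace = star (G * H).trace := by
        rw [← trace_conjTranspose, conjTranspose_mul, hH.eq, trace_mul_comm]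
    _ = (G * H).trace := by simp [trace_mul H hH]

open scoped MatrixOrder Matrix.Norms.L2Operator in
lemma trace_mul_nonneg {𝕜 : Type*} [RCLike 𝕜] {P Q : Matrix n n 𝕜} (hP : P.PosSemidef)
    (hQ : Q.PosSemidef) :
    0 ≤ (P * Q).trace := by
  classical
  obtain ⟨B, rfl⟩ := CStarAlgebra.nonneg_iff_eq_star_mul_self.mp hP.nonneg
  rw [Matrix.mul_assoc, trace_mul_comm]
  exact (hQ.mul_mul_conjTranspose_same B).trace_nonneg

lemma posSemidef_of_trace_mul_nonneg {𝕜 : Type*} [RCLike 𝕜] {G : Matrix n n 𝕜}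
    (hG : G.IsHermitian) (h : ∀ P : Matrix n n 𝕜, P.PosSemidef → 0 ≤ (G * P).trace) :
    G.PosSemidef := by
  refine .of_dotProduct_mulVec_nonneg hG fun x => ?_
  have := h _ (posSemidef_vecMulVec_self_star x)
  rwa [mul_vecMulVec, trace_vecMulVec, dotProduct_comm] at this

end MatrixTrace

open scoped MatrixOrder Matrix.Norms.L2Operator in
lemma exists_posSemidef_smul_one_sub {n : Type*} [Finite n] [DecidableEq n]
    {Y : Matrix n n ℂ} (hY : Y.IsHermitian) :
    ∃ c : ℝ, (c • (1 : Matrix n n ℂ) - Y).PosSemidef := by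
  have := Fintype.ofFinite n
  refine ⟨‖Y‖, ?_⟩
  rw [← Matrix.le_iff, ← Algebra.algebraMap_eq_smul_one]
  exact IsSelfAdjoint.le_algebraMap_norm_self hY


section PartialTrace

lemma isHermitian_kronecker {m n R : Type*} [CommSemiring R] [StarRing R] {X : Matrix m m R}
    {Y : Matrix n n R} (hX : X.IsHermitian) (hY : Y.IsHermitian) : (X ⊗ₖ Y).IsHermitian := by
  rw [IsHermitian, conjTranspose_kronecker, hX.eq, hY.eq]

variable {S T : Type*}

lemma idFst_eq_one_kronecker [DecidableEq S] (X : Matrix T T ℂ) :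
    (idFst X : Matrix (S × T) (S × T) ℂ) = 1 ⊗ₖ X := by
  ext x y
  simp [idFst, one_apply]

lemma trace_mul_idFst [Fintype S] [Fintype T] [DecidableEq S]
    (G : Matrix (S × T) (S × T) ℂ) (X : Matrix T T ℂ) :
    (G * idFst X).trace = (trInp G * X).trace := by
  simp only [Matrix.trace, diag_apply, Matrix.mul_apply, idFst, ite_mul, one_mul, zero_mul, mul_ite,
    mul_zero, Fintype.sum_prod_type, Finset.sum_ite_irrel, Finset.sum_const_zero,
    Finset.sum_ite_eq', Finset.mem_univ, ↓reduceIte, trInp, Finset.sum_mul]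
  rw [Finset.sum_comm]
  exact Finset.sum_congr rfl fun _ _ => Finset.sum_comm

lemma trInp_kronecker [Fintype S] (σ : Matrix S S ℂ) (τ : Matrix T T ℂ) :
    trInp (σ ⊗ₖ τ) = σ.trace • τ := by
  ext t t'
  simp [trInp, Matrix.trace, Finset.sum_mul]

variable [Fintype T]

lemma trace_kronecker_one_mul [Fintype S] [DecidableEq T] (σ : Matrix S S ℂ)
    (X : Matrix (S × T) (S × T) ℂ) : ((σ ⊗ₖ 1) * X).trace = (σ * trOut X).trace := by
  simp only [Matrix.trace, diag_apply, Matrix.mul_apply, kroneckerMap_apply, one_apply, mul_ite,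
    mul_one, mul_zero, ite_mul, zero_mul, Fintype.sum_prod_type, Finset.sum_ite_eq,
    Finset.mem_univ, ↓reduceIte, trOut, Finset.mul_sum]
  exact Finset.sum_congr rfl fun _ _ => Finset.sum_comm

lemma trOut_zero : trOut (0 : Matrix (S × T) (S × T) ℂ) = 0 := by
  ext s s'
  simp [trOut]

lemma trOut_add (X Y : Matrix (S × T) (S × T) ℂ) : trOut (X + Y) = trOut X + trOut Y := by
  ext s s'
  simp [trOut, Finset.sum_add_distrib]

lemma trOut_sub (X Y : Matrix (S × T) (S × T) ℂ) : trOut (X - Y) = trOut X - trOut Y := by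
  ext s s'
  simp [trOut]

lemma trOut_smul (c : ℝ) (X : Matrix (S × T) (S × T) ℂ) : trOut (c • X) = c • trOut X := by
  ext s s'
  simp [trOut, Finset.mul_sum]

lemma trOut_kronecker (σ : Matrix S S ℂ) (τ : Matrix T T ℂ) :
    trOut (σ ⊗ₖ τ) = τ.trace • σ := by
  ext s s'
  simp [trOut, Matrix.trace, ← Finset.mul_sum, mul_comm]

lemma isHermitian_trOut {X : Matrix (S × T) (S × T) ℂ} (hX : X.IsHermitian) :
    (trOut X).IsHermitian := by
  ext s s'
  simp [trOut, hX.apply]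

lemma exists_eq_kronecker_one [Fintype S] [DecidableEq S] [DecidableEq T] [Nonempty T]
    {N : Matrix (S × T) (S × T) ℂ}
    (hN : ∀ Z : Matrix (S × T) (S × T) ℂ, Z.IsHermitian → ∀ m : ℝ,
      trOut Z = m • (1 : Matrix S S ℂ) → (N * Z).trace = m) :
    ∃ σ : Matrix S S ℂ, σ.trace = 1 ∧ N = σ ⊗ₖ 1 := by
  let t₀ : T := Classical.arbitrary T
  let E : Matrix T T ℂ := Matrix.single t₀ t₀ 1
  have hE : E.IsHermitian := by simp [E, IsHermitian, conjTranspose_single]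
  have trace_E : E.trace = 1 := trace_single_eq_same t₀ 1
  let σ : Matrix S S ℂ := N.submatrix (·, t₀) (·, t₀)
  have trace_mul_kronecker (R : Matrix S S ℂ) : (N * R ⊗ₖ E).trace = (σ * R).trace := by
    simp [σ, E, Matrix.trace, Matrix.mul_apply, Fintype.sum_prod_type, single_apply, ite_and]
  refine ⟨σ, ?_, eq_of_forall_isHermitian_trace_mul_eq fun H hH => ?_⟩
  · have := hN (1 ⊗ₖ E) (isHermitian_kronecker isHermitian_one hE) 1
      (by simp [trOut_kronecker, trace_E])
    simpa [trace_mul_kronecker] using this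
  · have trOut_eq : trOut (H - trOut H ⊗ₖ E) = (0 : ℝ) • (1 : Matrix S S ℂ) := by
      simp [trOut_sub, trOut_kronecker, trace_E]
    have := hN _ (hH.sub (isHermitian_kronecker (isHermitian_trOut hH) hE)) 0 trOut_eq
    rw [mul_sub, trace_sub, trace_mul_kronecker, Complex.ofReal_zero, sub_eq_zero] at this
    rw [this, trace_kronecker_one_mul]

end PartialTrace

section TensorProduct

variable {B C B' C' : Type*}

/-- The Kronecker product of matrices on the bipartite systems `B × C` and `B' × C'`, reindexed to
`(B × B') × (C × C')`. -/
def kron2 (X : Matrix (B × C) (B × C) ℂ) (Y : Matrix (B' × C') (B' × C') ℂ) :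
    Matrix ((B × B') × (C × C')) ((B × B') × (C × C')) ℂ :=
  (X ⊗ₖ Y).submatrix (Equiv.prodProdProdComm B B' C C') (Equiv.prodProdProdComm B B' C C')

lemma kron2_kronecker (σ : Matrix B B ℂ) (τ : Matrix C C ℂ) (σ' : Matrix B' B' ℂ)
    (τ' : Matrix C' C' ℂ) :
    kron2 (σ ⊗ₖ τ) (σ' ⊗ₖ τ') = (σ ⊗ₖ σ') ⊗ₖ (τ ⊗ₖ τ') := by
  ext x y
  exact mul_mul_mul_comm _ _ _ _

lemma trOut_kron2 [Fintype C] [Fintype C'] (X : Matrix (B × C) (B × C) ℂ)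
    (Y : Matrix (B' × C') (B' × C') ℂ) : trOut (kron2 X Y) = trOut X ⊗ₖ trOut Y := by
  ext x y
  simp [trOut, kron2, Fintype.sum_prod_type, Finset.sum_mul_sum]

variable {A A' : Type*}

lemma idFst_kron2 [DecidableEq A] [DecidableEq A'] (X : Matrix (B × C) (B × C) ℂ)
    (Y : Matrix (B' × C') (B' × C') ℂ) :
    (idFst (kron2 X Y) :
      Matrix ((A × A') × (B × B') × (C × C')) ((A × A') × (B × B') × (C × C')) ℂ) =
      kron3 (idFst X) (idFst Y) := by
  ext x y
  by_cases h : x.1.1 = y.1.1 <;> by_cases h' : x.1.2 = y.1.2 <;>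
    simp [idFst, kron2, kron3, Prod.ext_iff, h, h']

/-- The regrouping of tensor factors that underlies `kron3`. -/
def kron3Equiv (A A' B B' C C' : Type*) :
    (A × A') × (B × B') × (C × C') ≃ (A × B × C) × (A' × B' × C') :=
  ((Equiv.refl _).prodCongr (Equiv.prodProdProdComm B B' C C')).trans
    (Equiv.prodProdProdComm A A' (B × C) (B' × C'))

variable (K G : Matrix (A × B × C) (A × B × C) ℂ) (L H : Matrix (A' × B' × C') (A' × B' × C') ℂ)

lemma kron3_eq_submatrix :
    kron3 K L = (K ⊗ₖ L).submatrix (kron3Equiv A A' B B' C C') (kron3Equiv A A' B B' C C') :=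
  rfl

lemma trInp_kron3 [Fintype A] [Fintype A'] :
    trInp (kron3 K L) = kron2 (trInp K) (trInp L) := by
  ext x y
  simp [trInp, kron3, kron2, Fintype.sum_prod_type, Finset.sum_mul_sum]

lemma kron3_sub_kron3 : kron3 G H - kron3 K L = kron3 (G - K) H + kron3 K (H - L) := by
  ext x y
  simp only [kron3, Matrix.sub_apply, Matrix.add_apply]
  ring

variable {K L} in
lemma posSemidef_kron3 [Finite A] [Finite B] [Finite C] [Finite A'] [Finite B'] [Finite C']
    (hK : K.PosSemidef) (hL : L.PosSemidef) : (kron3 K L).PosSemidef :=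
  (hK.kronecker hL).submatrix (kron3Equiv A A' B B' C C')

variable [Fintype A] [Fintype B] [Fintype C] [Fintype A'] [Fintype B'] [Fintype C']

lemma trace_kron3 : (kron3 K L).trace = K.trace * L.trace := by
  rw [kron3_eq_submatrix, ← trace_kronecker]
  exact (kron3Equiv A A' B B' C C').sum_comp fun x => (K ⊗ₖ L) x x

lemma kron3_mul_kron3 : kron3 G H * kron3 K L = kron3 (G * K) (H * L) := by
  simp only [kron3_eq_submatrix, submatrix_mul_equiv, mul_kronecker_mul]

end TensorProduct

/-- Feasibility of `G` for the Lagrange dual of the semidefinite program defining `mu K`: maximize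
`tr (G K)` over `G ≥ 0` with `Tr_A G = σ ⊗ I_C` for some `σ` of trace one. Positivity of `σ` is
inherited from `G` and not recorded. -/
def IsDualFeasible {A B C : Type*} [Fintype A] [Fintype B] [DecidableEq C]
    (G : Matrix (A × B × C) (A × B × C) ℂ) : Prop :=
  G.PosSemidef ∧ ∃ σ : Matrix B B ℂ, σ.trace = 1 ∧ trInp G = σ ⊗ₖ (1 : Matrix C C ℂ)

section Duality

variable {A B C : Type*} [Fintype A] [Fintype B] [Fintype C] [DecidableEq A] [DecidableEq B]

/-- The values `m` of the primal feasible points `X` of the semidefinite program whose infimum is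
`mu K`. -/
def feasibleValues (K : Matrix (A × B × C) (A × B × C) ℂ) : Set ℝ :=
  {m : ℝ | ∃ X : Matrix (B × C) (B × C) ℂ,
    trOut X = m • (1 : Matrix B B ℂ) ∧ LoewnerLE K (idFst X)}

lemma mu_eq_sInf (K : Matrix (A × B × C) (A × B × C) ℂ) : mu K = sInf (feasibleValues K) := rfl

variable {K L G : Matrix (A × B × C) (A × B × C) ℂ}

lemma feasibleValues_nonempty (hK : K.IsHermitian) : (feasibleValues K).Nonempty := by
  classical
  obtain ⟨c, hc⟩ := exists_posSemidef_smul_one_sub hK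
  refine ⟨c * Fintype.card C, c • 1, ?_, ?_⟩
  · rw [trOut_smul, ← one_kronecker_one, trOut_kronecker, trace_one, mul_smul,
      Nat.cast_smul_eq_nsmul, Nat.cast_smul_eq_nsmul]
  · rwa [LoewnerLE, idFst_eq_one_kronecker, kronecker_smul, one_kronecker_one]

lemma add_mem_feasibleValues {k l : ℝ} (hk : k ∈ feasibleValues K) (hl : l ∈ feasibleValues L) :
    k + l ∈ feasibleValues (K + L) := by
  obtain ⟨X, hX, hKX⟩ := hk
  obtain ⟨Y, hY, hLY⟩ := hl
  refine ⟨X + Y, by rw [trOut_add, hX, hY, add_smul], ?_⟩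
  rw [LoewnerLE, idFst_eq_one_kronecker] at *
  rw [kronecker_add, add_sub_add_comm]
  exact hKX.add hLY

lemma smul_mem_feasibleValues {c m : ℝ} (hc : 0 ≤ c) (hm : m ∈ feasibleValues K) :
    c • m ∈ feasibleValues (c • K) := by
  obtain ⟨X, hX, hKX⟩ := hm
  refine ⟨c • X, by rw [trOut_smul, hX, smul_assoc], ?_⟩
  rw [LoewnerLE, idFst_eq_one_kronecker] at *
  rw [kronecker_smul, ← smul_sub]
  exact hKX.smul hc

open scoped Pointwise in
lemma feasibleValues_smul {c : ℝ} (hc : 0 < c) :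
    feasibleValues (c • K) = c • feasibleValues K := by
  ext m
  rw [Set.mem_smul_set_iff_inv_smul_mem₀ hc.ne']
  constructor <;> intro hm
  · simpa [hc.ne'] using smul_mem_feasibleValues (inv_nonneg.2 hc.le) hm
  · simpa [hc.ne'] using smul_mem_feasibleValues hc.le hm

lemma mu_smul {c : ℝ} (hc : 0 < c) : mu (c • K) = c * mu K := by
  rw [mu_eq_sInf, feasibleValues_smul hc, Real.sInf_smul_of_nonneg hc.le, smul_eq_mul, mu_eq_sInf]

lemma zero_mem_feasibleValues_neg {P : Matrix (A × B × C) (A × B × C) ℂ} (hP : P.PosSemidef) :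
    0 ∈ feasibleValues (-P) :=
  ⟨0, by rw [trOut_zero, zero_smul], by
    rwa [LoewnerLE, idFst_eq_one_kronecker, kronecker_zero, zero_sub, neg_neg]⟩

lemma mem_feasibleValues_idFst {Z : Matrix (B × C) (B × C) ℂ} {m : ℝ}
    (hZ : trOut Z = m • (1 : Matrix B B ℂ)) :
    m ∈ feasibleValues (idFst Z : Matrix (A × B × C) (A × B × C) ℂ) :=
  ⟨Z, hZ, by rw [LoewnerLE, sub_self]; exact .zero⟩

lemma re_trace_mul_le [DecidableEq C] (hG : IsDualFeasible G) {m : ℝ} (hm : m ∈ feasibleValues K) :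
    (G * K).trace.re ≤ m := by
  obtain ⟨hG, σ, hσ, hGσ⟩ := hG
  obtain ⟨X, hX, hKX⟩ := hm
  have trace_idFst : (G * idFst X).trace = (m : ℂ) := by
    rw [trace_mul_idFst, hGσ, trace_kronecker_one_mul, hX]
    simp [hσ]
  have := (Complex.le_def.1 (trace_mul_nonneg hG hKX)).1
  rw [mul_sub, trace_sub, trace_idFst] at this
  simpa using this

lemma re_trace_mul_le_mu [DecidableEq C] (hG : IsDualFeasible G) (hK : K.IsHermitian) :
    (G * K).trace.re ≤ mu K :=
  le_csInf (feasibleValues_nonempty hK) fun _ => re_trace_mul_le hG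

lemma isDualFeasible_smul_one (A B C : Type*) [Fintype A] [Fintype B] [DecidableEq A]
    [DecidableEq B] [DecidableEq C] [Nonempty A] [Nonempty B] :
    IsDualFeasible (((Fintype.card A : ℝ) * Fintype.card B)⁻¹ •
      (1 : Matrix (A × B × C) (A × B × C) ℂ)) := by
  refine ⟨PosSemidef.one.smul (by positivity),
    (((Fintype.card A : ℝ) * Fintype.card B)⁻¹ • (1 : Matrix A A ℂ)).trace • 1, ?_, ?_⟩
  · simp only [trace_smul, trace_one, Complex.real_smul, smul_eq_mul]
    push_cast
    field_simp
  · rw [← one_kronecker_one, ← smul_kronecker, trInp_kronecker, ← one_kronecker_one,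
      smul_kronecker]

variable [Nonempty A] [Nonempty B]

lemma bddBelow_feasibleValues (K : Matrix (A × B × C) (A × B × C) ℂ) :
    BddBelow (feasibleValues K) := by
  classical
  exact ⟨_, fun _ => re_trace_mul_le (isDualFeasible_smul_one A B C)⟩

lemma feasibleValues_nonneg (hK : K.PosSemidef) {m : ℝ} (hm : m ∈ feasibleValues K) : 0 ≤ m := by
  classical
  exact (Complex.le_def.1 (trace_mul_nonneg (isDualFeasible_smul_one A B C).1 hK)).1.trans
    (re_trace_mul_le (isDualFeasible_smul_one A B C) hm)

lemma mu_le {m : ℝ} (hm : m ∈ feasibleValues K) : mu K ≤ m :=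
  csInf_le (bddBelow_feasibleValues K) hm

open scoped Pointwise in
lemma mu_add_le (hK : K.IsHermitian) (hL : L.IsHermitian) : mu (K + L) ≤ mu K + mu L := by
  have hK₀ := feasibleValues_nonempty hK
  have hL₀ := feasibleValues_nonempty hL
  simp only [mu_eq_sInf]
  rw [← csInf_add hK₀ (bddBelow_feasibleValues K) hL₀ (bddBelow_feasibleValues L)]
  refine csInf_le_csInf (bddBelow_feasibleValues _) (hK₀.add hL₀) ?_
  rintro _ ⟨k, hk, l, hl, rfl⟩
  exact add_mem_feasibleValues hk hl

lemma exists_isHermitian_trace_mul_eq_mu (hK : K.IsHermitian) :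
    ∃ G : Matrix (A × B × C) (A × B × C) ℂ, G.IsHermitian ∧ (G * K).trace = mu K ∧
      ∀ Y : Matrix (A × B × C) (A × B × C) ℂ, Y.IsHermitian → (G * Y).trace ≤ mu Y := by
  obtain ⟨g, hgK, hg⟩ := exists_linearMap_eq_of_sublinear
    (fun Y : selfAdjoint (Matrix (A × B × C) (A × B × C) ℂ) => mu Y.1)
    (fun c hc Y => mu_smul hc) (fun X Y => mu_add_le X.2 Y.2) ⟨K, hK⟩
  obtain ⟨G, hG, trace_mul⟩ := exists_isHermitian_trace_mul_eq g
  refine ⟨G, hG, by rw [trace_mul K hK, hgK], fun Y hY => ?_⟩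
  rw [trace_mul Y hY]
  exact_mod_cast hg ⟨Y, hY⟩

lemma isDualFeasible_of_trace_mul_le_mu [DecidableEq C] [Nonempty C] (hG : G.IsHermitian)
    (h : ∀ Y : Matrix (A × B × C) (A × B × C) ℂ, Y.IsHermitian → (G * Y).trace ≤ mu Y) :
    IsDualFeasible G := by
  have trace_mul_le {Y : Matrix (A × B × C) (A × B × C) ℂ} {m : ℝ} (hY : Y.IsHermitian)
      (hm : m ∈ feasibleValues Y) : (G * Y).trace ≤ m :=
    (h Y hY).trans (mod_cast mu_le hm)
  refine ⟨posSemidef_of_trace_mul_nonneg hG fun P hP => ?_,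
    exists_eq_kronecker_one fun Z hZ m hm => ?_⟩
  · simpa using trace_mul_le hP.isHermitian.neg (zero_mem_feasibleValues_neg hP)
  · rw [← trace_mul_idFst]
    have hZ' : (idFst Z : Matrix (A × B × C) (A × B × C) ℂ).IsHermitian := by
      rw [idFst_eq_one_kronecker]
      exact isHermitian_kronecker isHermitian_one hZ
    refine le_antisymm (trace_mul_le hZ' (mem_feasibleValues_idFst hm)) ?_
    have trOut_neg : trOut (-Z) = (-m) • (1 : Matrix B B ℂ) := by
      rw [← zero_sub, trOut_sub, trOut_zero, hm, zero_sub, neg_smul]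
    have idFst_neg : (idFst (-Z) : Matrix (A × B × C) (A × B × C) ℂ) = -idFst Z := by
      ext
      simp [idFst]
    have := trace_mul_le hZ'.neg (idFst_neg ▸ mem_feasibleValues_idFst trOut_neg)
    simpa using this

theorem exists_isDualFeasible_trace_mul_eq_mu [DecidableEq C] [Nonempty C] (hK : K.IsHermitian) :
    ∃ G : Matrix (A × B × C) (A × B × C) ℂ, IsDualFeasible G ∧ (G * K).trace = mu K := by
  obtain ⟨G, hG, hGK, hle⟩ := exists_isHermitian_trace_mul_eq_mu hK
  exact ⟨G, isDualFeasible_of_trace_mul_le_mu hG hle, hGK⟩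

end Duality

section Multiplicativity

variable {A B C A' B' C' : Type*} [Fintype A] [Fintype B] [Fintype A'] [Fintype B']

lemma mul_mem_feasibleValues_kron3 [Fintype C] [Fintype C'] [DecidableEq A] [DecidableEq B]
    [DecidableEq A'] [DecidableEq B'] {K : Matrix (A × B × C) (A × B × C) ℂ}
    {L : Matrix (A' × B' × C') (A' × B' × C') ℂ} (hK : K.PosSemidef) (hL : L.PosSemidef)
    {k l : ℝ} (hk : k ∈ feasibleValues K) (hl : l ∈ feasibleValues L) :
    k * l ∈ feasibleValues (kron3 K L) := by
  obtain ⟨X, hX, hKX⟩ := hk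
  obtain ⟨Y, hY, hLY⟩ := hl
  have idFst_Y : (idFst Y : Matrix (A' × B' × C') (A' × B' × C') ℂ).PosSemidef := by
    simpa using hLY.add hL
  refine ⟨kron2 X Y, ?_, ?_⟩
  · rw [trOut_kron2, hX, hY, smul_kronecker, kronecker_smul, one_kronecker_one, smul_smul]
  · rw [LoewnerLE, idFst_kron2, kron3_sub_kron3]
    exact (posSemidef_kron3 hKX idFst_Y).add (posSemidef_kron3 hK hLY)

lemma isDualFeasible_kron3 [Finite C] [Finite C'] [DecidableEq C] [DecidableEq C']
    {G : Matrix (A × B × C) (A × B × C) ℂ} {H : Matrix (A' × B' × C') (A' × B' × C') ℂ}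
    (hG : IsDualFeasible G) (hH : IsDualFeasible H) : IsDualFeasible (kron3 G H) := by
  obtain ⟨hG, σ, hσ, hGσ⟩ := hG
  obtain ⟨hH, τ, hτ, hHτ⟩ := hH
  refine ⟨posSemidef_kron3 hG hH, σ ⊗ₖ τ, by rw [trace_kronecker, hσ, hτ, one_mul], ?_⟩
  rw [trInp_kron3, hGσ, hHτ, kron2_kronecker, one_kronecker_one]

end Multiplicativity

theorem mu_additive_general
    {A₀ B₀ B₁ A₀' B₀' B₁' : Type*}
    [Fintype A₀] [Fintype B₀] [Fintype B₁] [Fintype A₀'] [Fintype B₀'] [Fintype B₁']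
    [DecidableEq A₀] [DecidableEq B₀] [DecidableEq A₀'] [DecidableEq B₀']
    [Nonempty A₀] [Nonempty B₀] [Nonempty B₁] [Nonempty A₀'] [Nonempty B₀'] [Nonempty B₁']
    {K₁ : Matrix (A₀ × B₀ × B₁) (A₀ × B₀ × B₁) ℂ}
    {K₂ : Matrix (A₀' × B₀' × B₁') (A₀' × B₀' × B₁') ℂ}
    (h₁ : K₁.PosSemidef) (h₂ : K₂.PosSemidef) :
    mu (kron3 K₁ K₂) = mu K₁ * mu K₂ := by
  classical
  apply le_antisymm
  · exact le_sInf_mul_sInf (feasibleValues_nonempty h₁.isHermitian)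
      (feasibleValues_nonempty h₂.isHermitian) (fun _ => feasibleValues_nonneg h₁)
      (fun _ => feasibleValues_nonneg h₂)
      fun _ hk _ hl => mu_le (mul_mem_feasibleValues_kron3 h₁ h₂ hk hl)
  · obtain ⟨G₁, hG₁, hGK₁⟩ := exists_isDualFeasible_trace_mul_eq_mu h₁.isHermitian
    obtain ⟨G₂, hG₂, hGK₂⟩ := exists_isDualFeasible_trace_mul_eq_mu h₂.isHermitian
    calc mu K₁ * mu K₂ = (kron3 G₁ G₂ * kron3 K₁ K₂).trace.re := by
          rw [kron3_mul_kron3, trace_kron3, hGK₁, hGK₂, ← Complex.ofReal_mul, Complex.ofReal_re]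
      _ ≤ mu (kron3 K₁ K₂) :=
          re_trace_mul_le_mu (isDualFeasible_kron3 hG₁ hG₂) (posSemidef_kron3 h₁ h₂).isHermitian

/-- Additivity of the channel's bipartite conditional min-entropy: for `K₁, K₂` arising
from bipartite channels (positive semidefinite with `Tr_{B₁} Kᵢ = I`),
`μ(K₁ ⊠ K₂) = μ(K₁) · μ(K₂)`; equivalently `H_min(𝐀|𝐁) = −log μ` is additive under
tensor products of bipartite channels. -/
theorem mu_additive
    {A₀ B₀ B₁ A₀' B₀' B₁' : Type*}
    [Fintype A₀] [Fintype B₀] [Fintype B₁] [Fintype A₀'] [Fintype B₀'] [Fintype B₁']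
    [DecidableEq A₀] [DecidableEq B₀] [DecidableEq B₁]
    [DecidableEq A₀'] [DecidableEq B₀'] [DecidableEq B₁']
    [Nonempty A₀] [Nonempty B₀] [Nonempty B₁] [Nonempty A₀'] [Nonempty B₀'] [Nonempty B₁']
    (K₁ : Matrix (A₀ × B₀ × B₁) (A₀ × B₀ × B₁) ℂ)
    (K₂ : Matrix (A₀' × B₀' × B₁') (A₀' × B₀' × B₁') ℂ)
    (h₁ : K₁.PosSemidef) (hTP₁ : trLast3 K₁ = 1)
    (h₂ : K₂.PosSemidef) (hTP₂ : trLast3 K₂ = 1) :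
    mu (kron3 K₁ K₂) = mu K₁ * mu K₂ := by
  exact mu_additive_general h₁ h₂
end
end
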